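/- arXiv:2202.13807 — 3 statements merged into one kernel-verified Lean document; each statement's English description precedes it below -/
import Mathlib

section
/- Let P = {q : ℚ | ∃ m n : ℤ, q = 2^m·3^n} and T = {1, 4/3, 3/2, 2}. For all a, b ∈ T, if the arithmetic mean (a+b)/2 belongs to P, then (a+b)/2 belongs to T. Hence the generator of means restricted to Pythagorean sounds produces no sound outside the four consonances T. -/
/-- The set of Pythagorean sounds. -/
def pythagoreanSounds : Set ℚ := {q : ℚ | ∃ m n : ℤ, q = 2 ^ m * 3 ^ n}

/-- The four Pythagorean consonances of the tablet. -/
def tablet : Set ℚ := {1, 4/3, 3/2, 2}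

/-- The `p`-adic valuation of a Pythagorean sound vanishes for every prime `p` other than
`2` and `3`. -/
theorem padicValRat_eq_zero_of_mem_pythagoreanSounds {p : ℕ} [hp : Fact p.Prime] (hp3 : 3 < p)
    {q : ℚ} (hq : q ∈ pythagoreanSounds) : padicValRat p q = 0 := by
  obtain ⟨m, n, rfl⟩ := hq
  have h2 : padicValRat p (2 : ℚ) = 0 := by
    have h : padicValNat p 2 = 0 :=
      padicValNat.eq_zero_of_not_dvd fun h => by have := Nat.le_of_dvd two_pos h; omega
    simpa [h] using padicValRat.of_nat (p := p) (n := 2)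
  have h3 : padicValRat p (3 : ℚ) = 0 := by
    have h : padicValNat p 3 = 0 :=
      padicValNat.eq_zero_of_not_dvd fun h => by have := Nat.le_of_dvd three_pos h; omega
    simpa [h] using padicValRat.of_nat (p := p) (n := 3)
  rw [padicValRat.mul (by positivity) (by positivity), padicValRat.zpow,
    padicValRat.zpow, h2, h3]
  simp

/-- A prime larger than `3` times a Pythagorean sound is not a Pythagorean sound. -/
theorem prime_mul_notMem_pythagoreanSounds {p : ℕ} (hp : p.Prime) (hp3 : 3 < p) (m n : ℤ) :
    (p : ℚ) * (2 ^ m * 3 ^ n) ∉ pythagoreanSounds := by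
  intro h
  have : Fact p.Prime := ⟨hp⟩
  have h₁ := padicValRat_eq_zero_of_mem_pythagoreanSounds hp3 h
  rw [padicValRat.mul (by exact_mod_cast hp.ne_zero) (by positivity),
    padicValRat.self hp.one_lt,
    padicValRat_eq_zero_of_mem_pythagoreanSounds hp3 ⟨m, n, rfl⟩] at h₁
  norm_num at h₁

/-- Any arithmetic mean of two tablet consonances that is a Pythagorean sound
already belongs to the tablet: the generator of means restricted to Pythagorean
sounds produces nothing outside the four consonances. -/
theorem mean_generator_tablet_pythagorean :
    ∀ a ∈ tablet, ∀ b ∈ tablet,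
      (a + b) / 2 ∈ pythagoreanSounds → (a + b) / 2 ∈ tablet := by
  have h76 := prime_mul_notMem_pythagoreanSounds (p := 7) (by norm_num) (by norm_num) (-1) (-1)
  have h54 := prime_mul_notMem_pythagoreanSounds (p := 5) (by norm_num) (by norm_num) (-2) 0
  have h1712 := prime_mul_notMem_pythagoreanSounds (p := 17) (by norm_num) (by norm_num) (-2) (-1)
  have h53 := prime_mul_notMem_pythagoreanSounds (p := 5) (by norm_num) (by norm_num) 0 (-1)
  have h74 := prime_mul_notMem_pythagoreanSounds (p := 7) (by norm_num) (by norm_num) (-2) 0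
  norm_num [zpow_neg] at h76 h54 h1712 h53 h74
  rintro a (rfl | rfl | rfl | rfl) b (rfl | rfl | rfl | rfl) h <;> norm_num at h <;>
    first
    | contradiction
    | norm_num [tablet]
end

section
/- Let N = {q : ℚ | ∃ m n p : ℤ, q = 2^m·3^n·5^p}, T = {1, 4/3, 3/2, 2}, and S₁ = {1, 9/8, 5/4, 81/64, 4/3, 45/32, 3/2, 25/16, 5/3, 2}. Then S₁ is the smallest subset of ℚ containing T that is mean-closed with respect to N: (a) T ⊆ S₁; (b) for all a, b ∈ S₁, if (a+b)/2 ∈ N then (a+b)/2 ∈ S₁; (c) every subset S ⊆ ℚ with T ⊆ S satisfying the closure property (b) contains S₁. -/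
/-- The set of natural (5-limit) sounds. -/
def naturalSounds : Set ℚ := {q : ℚ | ∃ m n p : ℤ, q = 2 ^ m * 3 ^ n * 5 ^ p}

/-- The scale 𝔖_N^(1) obtained by iterating the generator of means from the tablet
under the natural restriction. -/
def scaleOne : Set ℚ := {1, 9/8, 5/4, 81/64, 4/3, 45/32, 3/2, 25/16, 5/3, 2}

/-- A set is mean-closed with respect to the natural sounds when every arithmetic
mean of two of its elements that is a natural sound again belongs to it. -/
def MeanClosed (S : Set ℚ) : Prop :=
  ∀ a ∈ S, ∀ b ∈ S, (a + b) / 2 ∈ naturalSounds → (a + b) / 2 ∈ S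

/-- The numerator of a natural sound has no prime factors other than 2, 3 and 5. -/
theorem exists_num_dvd_pow_of_mem_naturalSounds {q : ℚ} (hq : q ∈ naturalSounds) :
    ∃ K : ℕ, q.num.natAbs ∣ 30 ^ K := by
  obtain ⟨m, n, p, rfl⟩ := hq
  set q : ℚ := 2 ^ m * 3 ^ n * 5 ^ p with hq
  set K : ℕ := m.natAbs + n.natAbs + p.natAbs with hK
  obtain ⟨a, ha⟩ := Int.eq_ofNat_of_zero_le (show 0 ≤ (K : ℤ) - m by omega)
  obtain ⟨b, hb⟩ := Int.eq_ofNat_of_zero_le (show 0 ≤ (K : ℤ) - n by omega)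
  obtain ⟨c, hc⟩ := Int.eq_ofNat_of_zero_le (show 0 ≤ (K : ℤ) - p by omega)
  have split_pow : ∀ (x : ℚ) (e : ℤ) (d : ℕ), x ≠ 0 → (K : ℤ) - e = d →
      x ^ e * x ^ d = x ^ K := by
    intro x e d hx hd
    rw [← zpow_natCast x d, ← zpow_natCast x K, ← zpow_add₀ hx, ← hd]
    congr 1
    ring
  have hmul : q * (2 ^ a * 3 ^ b * 5 ^ c : ℕ) = 30 ^ K := by
    push_cast
    calc q * (2 ^ a * 3 ^ b * 5 ^ c)
        = (2 ^ m * 2 ^ a) * (3 ^ n * 3 ^ b) * (5 ^ p * 5 ^ c) := by rw [hq]; ring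
      _ = 30 ^ K := by
        rw [split_pow 2 m a (by norm_num) ha, split_pow 3 n b (by norm_num) hb,
          split_pow 5 p c (by norm_num) hc, ← mul_pow, ← mul_pow]
        norm_num
  have hnum : q.num * (2 ^ a * 3 ^ b * 5 ^ c : ℕ) = 30 ^ K * q.den := by
    have h := q.mul_den_eq_num
    have : (q.num : ℚ) * (2 ^ a * 3 ^ b * 5 ^ c : ℕ) = 30 ^ K * q.den := by
      rw [← h, ← hmul]
      ring
    exact_mod_cast this
  refine ⟨K, q.reduced.dvd_of_dvd_mul_right ?_⟩
  have hdvd := Int.natAbs_dvd_natAbs.mpr (Dvd.intro _ hnum)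
  simpa [Int.natAbs_mul, Int.natAbs_pow] using hdvd

/-- A divisor of a power of `b` that is less than `2 ^ j` already divides `b ^ j`. -/
theorem Nat.dvd_pow_of_dvd_pow_of_lt_two_pow {n b K j : ℕ} (hn : n ≠ 0) (h : n ∣ b ^ K)
    (hlt : n < 2 ^ j) : n ∣ b ^ j := by
  refine (Nat.dvd_iff_prime_pow_dvd_dvd _ _).mpr fun p k hp hpk => ?_
  rcases Nat.eq_zero_or_pos k with rfl | hk
  · simp
  have hpb : p ∣ b := hp.dvd_of_dvd_pow ((dvd_pow_self p hk.ne').trans (hpk.trans h))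
  have hkj : k < j := (Nat.pow_lt_pow_iff_right (by norm_num : 1 < 2)).mp <|
    ((Nat.pow_le_pow_left hp.two_le k).trans
      (Nat.le_of_dvd (Nat.pos_of_ne_zero hn) hpk)).trans_lt hlt
  exact (pow_dvd_pow_of_dvd hpb k).trans (pow_dvd_pow b hkj.le)

/-- The scale `scaleOne` as a finset. -/
def scaleOneFinset : Finset ℚ := {1, 9/8, 5/4, 81/64, 4/3, 45/32, 3/2, 25/16, 5/3, 2}

theorem mem_scaleOneFinset {q : ℚ} : q ∈ scaleOneFinset ↔ q ∈ scaleOne := by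
  simp [scaleOneFinset, scaleOne]

/-- The numerators of the means of `scaleOne` are below `2 ^ 10`, so `30 ^ 10` detects which of
them are 5-smooth. -/
theorem mean_mem_scaleOneFinset_of_num_dvd : ∀ a ∈ scaleOneFinset, ∀ b ∈ scaleOneFinset,
    ((a + b) / 2).num.natAbs ≠ 0 ∧ ((a + b) / 2).num.natAbs < 2 ^ 10 ∧
      (((a + b) / 2).num.natAbs ∣ 30 ^ 10 → (a + b) / 2 ∈ scaleOneFinset) := by
  decide +kernel

theorem meanClosed_scaleOne : MeanClosed scaleOne := by
  intro a ha b hb hab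
  rw [← mem_scaleOneFinset] at ha hb ⊢
  obtain ⟨K, hK⟩ := exists_num_dvd_pow_of_mem_naturalSounds hab
  obtain ⟨hne, hlt, hmem⟩ := mean_mem_scaleOneFinset_of_num_dvd a ha b hb
  exact hmem (Nat.dvd_pow_of_dvd_pow_of_lt_two_pow hne hK hlt)

theorem MeanClosed.mem_of_mean_eq {S : Set ℚ} (hS : MeanClosed S) {a b c : ℚ} (ha : a ∈ S)
    (hb : b ∈ S) (h : (a + b) / 2 = c) (m n p : ℤ) (hc : c = 2 ^ m * 3 ^ n * 5 ^ p) : c ∈ S := by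
  subst h
  exact hS a ha b hb ⟨m, n, p, hc⟩

theorem scaleOne_subset_of_meanClosed {S : Set ℚ} (hT : tablet ⊆ S) (hS : MeanClosed S) :
    scaleOne ⊆ S := by
  have h1 : (1 : ℚ) ∈ S := hT (by simp [tablet])
  have h43 : (4/3 : ℚ) ∈ S := hT (by simp [tablet])
  have h32 : (3/2 : ℚ) ∈ S := hT (by simp [tablet])
  have h2 : (2 : ℚ) ∈ S := hT (by simp [tablet])
  have h54 : (5/4 : ℚ) ∈ S := hS.mem_of_mean_eq h1 h32 (by norm_num) (-2) 0 1 (by norm_num)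
  have h53 : (5/3 : ℚ) ∈ S := hS.mem_of_mean_eq h43 h2 (by norm_num) 0 (-1) 1 (by norm_num)
  have h98 : (9/8 : ℚ) ∈ S := hS.mem_of_mean_eq h1 h54 (by norm_num) (-3) 2 0 (by norm_num)
  have h2516 : (25/16 : ℚ) ∈ S := hS.mem_of_mean_eq h98 h2 (by norm_num) (-4) 0 2 (by norm_num)
  have h4532 : (45/32 : ℚ) ∈ S :=
    hS.mem_of_mean_eq h54 h2516 (by norm_num) (-5) 2 1 (by norm_num)
  have h8164 : (81/64 : ℚ) ∈ S :=
    hS.mem_of_mean_eq h98 h4532 (by norm_num) (-6) 4 0 (by norm_num)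
  rintro q (rfl | rfl | rfl | rfl | rfl | rfl | rfl | rfl | rfl | rfl) <;> assumption

/-- 𝔖_N^(1) is the smallest subset of ℚ containing the four tablet consonances that
is mean-closed with respect to the natural sounds. -/
theorem scaleOne_smallest_mean_closed :
    tablet ⊆ scaleOne ∧ MeanClosed scaleOne ∧
    ∀ S : Set ℚ, tablet ⊆ S → MeanClosed S → scaleOne ⊆ S := by
  refine ⟨?_, meanClosed_scaleOne, fun S => scaleOne_subset_of_meanClosed⟩
  rintro q (rfl | rfl | rfl | rfl) <;> simp [scaleOne]
end

section
/- Let N = {q : ℚ | ∃ m n p : ℤ, q = 2^m·3^n·5^p}, S_N = {1, 9/8, 5/4, 4/3, 3/2, 5/3, 15/8, 2}, and S₂ = {1, 9/8, 5/4, 81/64, 4/3, 45/32, 3/2, 25/16, 5/3, 27/16, 15/8, 2}. Then S₂ is the smallest subset of ℚ containing S_N that is mean-closed with respect to N: (a) S_N ⊆ S₂; (b) for all a, b ∈ S₂, if (a+b)/2 ∈ N then (a+b)/2 ∈ S₂; (c) every subset S ⊆ ℚ with S_N ⊆ S satisfying the closure property (b) contains S₂. -/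
/-- Zarlino's natural scale. -/
def naturalScale : Set ℚ := {1, 9/8, 5/4, 4/3, 3/2, 5/3, 15/8, 2}

/-- The scale 𝔖_N^(2) obtained by iterating the generator of means from the natural
scale under the natural restriction. -/
def scaleTwo : Set ℚ :=
  {1, 9/8, 5/4, 81/64, 4/3, 45/32, 3/2, 25/16, 5/3, 27/16, 15/8, 2}

/-- Up to an integer factor, an integer power of a divisor `b` of `c` is a natural power
of `c`. -/
theorem exists_zpow_mul_intCast_eq_pow {b c : ℤ} (hb : b ≠ 0) (hbc : b ∣ c) (m : ℤ) :
    ∃ (k : ℕ) (z : ℤ), (b : ℚ) ^ m * z = (c : ℚ) ^ k := by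
  have hb' : (b : ℚ) ≠ 0 := by exact_mod_cast hb
  obtain ⟨d, rfl⟩ := hbc
  obtain ⟨n, rfl | rfl⟩ := m.eq_nat_or_neg
  · exact ⟨n, d ^ n, by push_cast; rw [zpow_natCast, mul_pow]⟩
  · exact ⟨0, b ^ n, by push_cast; rw [zpow_neg, zpow_natCast, pow_zero]; field_simp⟩

/-- The numerator of a natural sound divides a power of `30`. -/
theorem num_dvd_pow_of_mem_naturalSounds {q : ℚ} (hq : q ∈ naturalSounds) :
    ∃ k : ℕ, q.num ∣ 30 ^ k := by
  obtain ⟨m, n, p, rfl⟩ := hq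
  obtain ⟨k₂, z₂, h₂⟩ :=
    exists_zpow_mul_intCast_eq_pow (b := 2) (c := 30) (by norm_num) (by norm_num) m
  obtain ⟨k₃, z₃, h₃⟩ :=
    exists_zpow_mul_intCast_eq_pow (b := 3) (c := 30) (by norm_num) (by norm_num) n
  obtain ⟨k₅, z₅, h₅⟩ :=
    exists_zpow_mul_intCast_eq_pow (b := 5) (c := 30) (by norm_num) (by norm_num) p
  push_cast at h₂ h₃ h₅
  refine ⟨k₂ + k₃ + k₅, ?_⟩
  have hz : (2 ^ m * 3 ^ n * 5 ^ p : ℚ) * (z₂ * z₃ * z₅ : ℤ) = 30 ^ (k₂ + k₃ + k₅) := by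
    rw [pow_add, pow_add, ← h₂, ← h₃, ← h₅]
    push_cast
    ring
  generalize (2 ^ m * 3 ^ n * 5 ^ p : ℚ) = q at hz ⊢
  have hnum : q.num * (z₂ * z₃ * z₅) = q.den * 30 ^ (k₂ + k₃ + k₅) := by
    have h : (q.num : ℚ) * (z₂ * z₃ * z₅ : ℤ) = q.den * 30 ^ (k₂ + k₃ + k₅) := by
      rw [← hz, ← mul_assoc, Rat.den_mul_eq_num]
    exact_mod_cast h
  exact q.isCoprime_num_den.dvd_of_dvd_mul_left ⟨_, hnum.symm⟩

/-- A divisor coprime to `30` of the numerator of a natural sound is trivial. -/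
theorem eq_one_of_dvd_num_of_mem_naturalSounds {q : ℚ} (hq : q ∈ naturalSounds) {d : ℕ}
    (hd : d.Coprime 30) (hdq : d ∣ q.num.natAbs) : d = 1 := by
  obtain ⟨k, hk⟩ := num_dvd_pow_of_mem_naturalSounds hq
  have hk' : q.num.natAbs ∣ 30 ^ k := by simpa [Int.natAbs_pow] using Int.natAbs_dvd_natAbs.2 hk
  exact Nat.Coprime.eq_one_of_dvd (hd.pow_right k) (hdq.trans hk')

/-- The elements of `scaleTwo` as a finite set. -/
def scaleTwoFinset : Finset ℚ :=
  {1, 9/8, 5/4, 81/64, 4/3, 45/32, 3/2, 25/16, 5/3, 27/16, 15/8, 2}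

theorem mem_scaleTwoFinset {q : ℚ} : q ∈ scaleTwoFinset ↔ q ∈ scaleTwo := by
  simp [scaleTwoFinset, scaleTwo]

/-- The part of `n` coprime to `30`, provided `n` is divisible by no fifth power of a prime
factor of `30`. -/
def coprimePart (n : ℕ) : ℕ := n / n.gcd (30 ^ 4)

theorem coprimePart_dvd (n : ℕ) : coprimePart n ∣ n :=
  Nat.div_dvd_of_dvd (Nat.gcd_dvd_left n _)

theorem mean_mem_scaleTwoFinset_or_coprimePart_ne_one :
    ∀ a ∈ scaleTwoFinset, ∀ b ∈ scaleTwoFinset, (a + b) / 2 ∈ scaleTwoFinset ∨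
      (coprimePart ((a + b) / 2).num.natAbs).Coprime 30 ∧
        coprimePart ((a + b) / 2).num.natAbs ≠ 1 := by
  decide +kernel

theorem meanClosed_scaleTwo : MeanClosed scaleTwo := by
  intro a ha b hb hab
  rcases mean_mem_scaleTwoFinset_or_coprimePart_ne_one a (mem_scaleTwoFinset.2 ha) b
    (mem_scaleTwoFinset.2 hb) with h | ⟨hcop, hne⟩
  · exact mem_scaleTwoFinset.1 h
  · exact absurd (eq_one_of_dvd_num_of_mem_naturalSounds hab hcop (coprimePart_dvd _)) hne

theorem scaleTwo_subset_of_meanClosed {S : Set ℚ} (hS : naturalScale ⊆ S)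
    (hmean : MeanClosed S) : scaleTwo ⊆ S := by
  have mean_mem {a b c : ℚ} (ha : a ∈ S) (hb : b ∈ S) (hc : (a + b) / 2 = c)
      (hN : c ∈ naturalSounds) : c ∈ S := hc ▸ hmean a ha b hb (hc ▸ hN)
  simp only [naturalScale, Set.insert_subset_iff, Set.singleton_subset_iff] at hS
  obtain ⟨h1, h9_8, h5_4, h4_3, h3_2, h5_3, h15_8, h2⟩ := hS
  have h25_16 : (25/16 : ℚ) ∈ S :=
    mean_mem h9_8 h2 (by norm_num) ⟨-4, 0, 2, by norm_num⟩
  have h27_16 : (27/16 : ℚ) ∈ S :=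
    mean_mem h3_2 h15_8 (by norm_num) ⟨-4, 3, 0, by norm_num⟩
  have h45_32 : (45/32 : ℚ) ∈ S :=
    mean_mem h9_8 h27_16 (by norm_num) ⟨-5, 2, 1, by norm_num⟩
  have h81_64 : (81/64 : ℚ) ∈ S :=
    mean_mem h9_8 h45_32 (by norm_num) ⟨-6, 4, 0, by norm_num⟩
  simp only [scaleTwo, Set.insert_subset_iff, Set.singleton_subset_iff]
  exact ⟨h1, h9_8, h5_4, h81_64, h4_3, h45_32, h3_2, h25_16, h5_3, h27_16, h15_8, h2⟩

/-- 𝔖_N^(2) is the smallest subset of ℚ containing Zarlino's natural scale that is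
mean-closed with respect to the natural sounds. -/
theorem scaleTwo_smallest_mean_closed :
    naturalScale ⊆ scaleTwo ∧ MeanClosed scaleTwo ∧
    ∀ S : Set ℚ, naturalScale ⊆ S → MeanClosed S → scaleTwo ⊆ S := by
  refine ⟨?_, meanClosed_scaleTwo, fun S => scaleTwo_subset_of_meanClosed⟩
  simp [naturalScale, scaleTwo, Set.insert_subset_iff]
end
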